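/- arXiv:2410.23170 — 3 statements merged into one kernel-verified Lean document; each statement's English description precedes it below -/
import Mathlib

section
/- Let g : ℝ^d → ℝ be continuously differentiable, and let λ > 0 and C > 0 satisfy ‖∇g(x)‖ ≥ C for every x ∈ ℝ^d with g(x) ≥ 0. Let z : [0,∞) → ℝ^d be differentiable and suppose that z'(t) = −λ ∇g(z(t))/‖∇g(z(t))‖ for every t ≥ 0 at which g(z(t)) ≥ 0. Then there exists t₀ with 0 ≤ t₀ ≤ max(g(z(0)), 0)/(λ C) such that g(z(t)) ≤ 0 for all t ≥ t₀. -/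
/-!
Along the trajectory, `f t = g (z t)` has derivative `⟪∇g, z'⟫ = -λ‖∇g‖ ≤ -λC` whenever
`f t ≥ 0`. Since `f` decreases strictly through its zeros, it cannot become positive again once it
is nonpositive. So if `f t > 0`, then `f > 0` on all of `[0, t]`, hence `f t ≤ f 0 - λC t`, and
this forces `t < f 0 / (λC)`.
-/

open Set InnerProductSpace

section RightDerivative

variable {f f' : ℝ → ℝ} {a b c : ℝ}

theorem image_nonpos_of_deriv_right_neg_of_eq_zero (hf : ContinuousOn f (Icc a b))
    (hf' : ∀ x ∈ Ico a b, HasDerivWithinAt f (f' x) (Ici x) x) (ha : f a ≤ 0)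
    (hneg : ∀ x ∈ Ico a b, f x = 0 → f' x < 0) : ∀ x ∈ Icc a b, f x ≤ 0 :=
  image_le_of_deriv_right_lt_deriv_boundary hf hf' ha (fun x ↦ hasDerivAt_const x 0) hneg

theorem image_sub_le_mul_sub_of_deriv_right_le (hf : ContinuousOn f (Icc a b))
    (hf' : ∀ x ∈ Ico a b, HasDerivWithinAt f (f' x) (Ici x) x)
    (hbound : ∀ x ∈ Ico a b, f' x ≤ c) : ∀ x ∈ Icc a b, f x - f a ≤ c * (x - a) := by
  have line_deriv (x : ℝ) : HasDerivAt (fun y ↦ f a + c * (y - a)) c x := by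
    simpa using (((hasDerivAt_id x).sub_const a).const_mul c).const_add (f a)
  intro x hx
  rw [sub_le_iff_le_add']
  exact image_le_of_deriv_right_le_deriv_boundary hf hf' (by simp)
    (fun y _ ↦ (line_deriv y).continuousAt.continuousWithinAt)
    (fun y _ ↦ (line_deriv y).hasDerivWithinAt) hbound hx

theorem nonpos_of_deriv_le_neg_of_nonneg (hc : 0 < c)
    (hf : ∀ x ∈ Ici a, HasDerivWithinAt f (f' x) (Ici a) x)
    (hbound : ∀ x ∈ Ici a, 0 ≤ f x → f' x ≤ -c) {x : ℝ} (hx : a + max (f a) 0 / c ≤ x) :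
    f x ≤ 0 := by
  have cont {s : ℝ} (hs : a ≤ s) : ContinuousOn f (Icc s x) := fun y hy ↦
    (hf y (hs.trans hy.1)).continuousWithinAt.mono fun _ hu ↦ hs.trans hu.1
  have right_deriv {s : ℝ} (hs : a ≤ s) :
      ∀ y ∈ Ico s x, HasDerivWithinAt f (f' y) (Ici y) y := fun y hy ↦
    (hf y (hs.trans hy.1)).mono (Ici_subset_Ici.2 (hs.trans hy.1))
  by_contra! hpos
  have pos_before : ∀ s ∈ Icc a x, 0 < f s := by
    intro s hs
    by_contra! hle
    refine hpos.not_ge (image_nonpos_of_deriv_right_neg_of_eq_zero (cont hs.1)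
      (right_deriv hs.1) hle (fun y hy hy0 ↦ ?_) x (right_mem_Icc.2 hs.2))
    exact (hbound y (hs.1.trans hy.1) hy0.ge).trans_lt (neg_neg_of_pos hc)
  have hax : a ≤ x := (le_add_of_nonneg_right (by positivity)).trans hx
  have decrease : f x - f a ≤ -c * (x - a) :=
    image_sub_le_mul_sub_of_deriv_right_le (cont le_rfl) (right_deriv le_rfl)
      (fun y hy ↦ hbound y hy.1 (pos_before y (Ico_subset_Icc_self hy)).le) x
      (right_mem_Icc.2 hax)
  have elapsed : max (f a) 0 ≤ (x - a) * c := (div_le_iff₀ hc).1 (le_sub_iff_add_le'.2 hx)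
  linarith [le_max_left (f a) 0]

end RightDerivative

section Gradient

variable {F : Type*} [NormedAddCommGroup F] [InnerProductSpace ℝ F]

theorem real_inner_div_norm_smul_self (r : ℝ) (v : F) :
    ⟪v, (r / ‖v‖) • v⟫_ℝ = r * ‖v‖ := by
  rcases eq_or_ne v 0 with rfl | hv
  · simp
  · have hv' : ‖v‖ ≠ 0 := norm_ne_zero_iff.2 hv
    rw [real_inner_smul_right, real_inner_self_eq_norm_sq]
    field_simp

variable [CompleteSpace F]

theorem hasDerivWithinAt_comp_of_hasGradientAt {g : F → ℝ} {v w : F} {z : ℝ → F} {s : Set ℝ}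
    {t : ℝ} (hg : HasGradientAt g v (z t)) (hz : HasDerivWithinAt z w s t) :
    HasDerivWithinAt (fun u ↦ g (z u)) ⟪v, w⟫_ℝ s t := by
  simpa [Function.comp_def] using hg.hasFDerivAt.comp_hasDerivWithinAt t hz

theorem stmt_4_general {g : F → ℝ} (hg : Differentiable ℝ g) {lam C : ℝ} (hlam : 0 < lam)
    (hC : 0 < C) (hgrad : ∀ x, 0 ≤ g x → C ≤ ‖gradient g x‖) {z z' : ℝ → F}
    (hz : ∀ t ≥ (0 : ℝ), HasDerivWithinAt z (z' t) (Ici 0) t)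
    (hz' : ∀ t ≥ (0 : ℝ), 0 ≤ g (z t) →
      z' t = (-lam / ‖gradient g (z t)‖) • gradient g (z t)) :
    ∀ t ≥ max (g (z 0)) 0 / (lam * C), g (z t) ≤ 0 := by
  have deriv_le (t : ℝ) (ht : 0 ≤ t) (hgt : 0 ≤ g (z t)) :
      ⟪gradient g (z t), z' t⟫_ℝ ≤ -(lam * C) := by
    rw [hz' t ht hgt, real_inner_div_norm_smul_self, neg_mul, neg_le_neg_iff]
    exact mul_le_mul_of_nonneg_left (hgrad _ hgt) hlam.le
  intro t ht
  exact nonpos_of_deriv_le_neg_of_nonneg (mul_pos hlam hC)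
    (fun s hs ↦ hasDerivWithinAt_comp_of_hasGradientAt (hg (z s)).hasGradientAt (hz s hs))
    deriv_le (by rwa [zero_add])

end Gradient

/-- Theorem 5.1: under the normalized inward-gradient velocity on `{g ≥ 0}` and the
lower bound `‖∇g‖ ≥ C` there, the trajectory enters `Ω = {g ≤ 0}` within time
`max (g (z 0)) 0 / (λ C)` and remains there. -/
theorem stmt_4 {d : ℕ} (g : EuclideanSpace ℝ (Fin d) → ℝ) (hg : ContDiff ℝ 1 g)
    (lam C : ℝ) (hlam : 0 < lam) (hC : 0 < C)
    (hgrad : ∀ x, 0 ≤ g x → C ≤ ‖gradient g x‖)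
    (z : ℝ → EuclideanSpace ℝ (Fin d)) (z' : ℝ → EuclideanSpace ℝ (Fin d))
    (hz : ∀ t ≥ (0 : ℝ), HasDerivWithinAt z (z' t) (Set.Ici 0) t)
    (hz' : ∀ t ≥ (0 : ℝ), 0 ≤ g (z t) →
      z' t = (-lam / ‖gradient g (z t)‖) • gradient g (z t)) :
    ∃ t₀ : ℝ, 0 ≤ t₀ ∧ t₀ ≤ max (g (z 0)) 0 / (lam * C) ∧ ∀ t ≥ t₀, g (z t) ≤ 0 :=
  ⟨_, by positivity, le_rfl,
    stmt_4_general (hg.differentiable one_ne_zero) hlam hC hgrad hz hz'⟩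
end

section
/- For every ε > 0 there exists a continuous function v : ℝ → ℝ with v(−1) ≥ 0 and v(1) ≤ 0 such that ∫_{−1}^{1} exp(−(x − 1/2)²/2) · (v(x) + 1/2)² dx < ε. -/
/-!
The endpoints form a closed null set. Move the target `f` towards the prescribed boundary data `g`
with weight `χₙ`, where the thickened indicators `χₙ` equal `1` on the boundary and tend to `0`
off it. The result agrees with `g` on the boundary, and its `p`-th power distance to `f` is
`χₙ ^ p * ‖g - f‖ ^ p`, whose integral tends to `0` by dominated convergence.
-/

open MeasureTheory Set Filter Topology

theorem tendsto_thickenedIndicator_zero_of_notMem {X : Type*} [PseudoEMetricSpace X] {F : Set X}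
    (hF : IsClosed F) {δ : ℕ → ℝ} (hδ_pos : ∀ n, 0 < δ n) (hδ : Tendsto δ atTop (𝓝 0))
    {x : X} (hx : x ∉ F) :
    Tendsto (fun n ↦ thickenedIndicator (hδ_pos n) F x) atTop (𝓝 0) := by
  simpa only [hF.closure_eq, indicator_of_notMem hx] using
    tendsto_pi_nhds.1 (thickenedIndicator_tendsto_indicator_closure hδ_pos hδ F) x

section ClosedNullSet

variable {X E G : Type*} [PseudoEMetricSpace X] [MeasurableSpace X] [OpensMeasurableSpace X]
  [SeminormedAddCommGroup E] [NormedSpace ℝ E] [NormedAddCommGroup G] [NormedSpace ℝ G]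
  {μ : Measure X} {F : Set X} {p : ℝ}

theorem tendsto_integral_thickenedIndicator_rpow_smul_of_measure_eq_zero
    (hF : IsClosed F) (hμF : μ F = 0) (hp : 0 < p) {h : X → G} (hh : Integrable h μ)
    {δ : ℕ → ℝ} (hδ_pos : ∀ n, 0 < δ n) (hδ : Tendsto δ atTop (𝓝 0)) :
    Tendsto (fun n ↦ ∫ x, (thickenedIndicator (hδ_pos n) F x : ℝ) ^ p • h x ∂μ) atTop (𝓝 0) := by
  have hcont (n : ℕ) : Continuous fun x ↦ (thickenedIndicator (hδ_pos n) F x : ℝ) ^ p :=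
    (NNReal.continuous_coe.comp (thickenedIndicator (hδ_pos n) F).continuous).rpow_const
      fun _ ↦ .inr hp.le
  have hmeas (n : ℕ) :
      AEStronglyMeasurable (fun x ↦ (thickenedIndicator (hδ_pos n) F x : ℝ) ^ p • h x) μ :=
    (hcont n).aestronglyMeasurable.smul hh.aestronglyMeasurable
  have hbound (n : ℕ) (x : X) : ‖(thickenedIndicator (hδ_pos n) F x : ℝ) ^ p • h x‖ ≤ ‖h x‖ := by
    rw [norm_smul, Real.norm_of_nonneg (by positivity)]
    exact mul_le_of_le_one_left (norm_nonneg _) <|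
      Real.rpow_le_one NNReal.zero_le_coe (mod_cast thickenedIndicator_le_one (hδ_pos n) F x) hp.le
  have hlim (x : X) (hx : x ∉ F) :
      Tendsto (fun n ↦ (thickenedIndicator (hδ_pos n) F x : ℝ) ^ p • h x) atTop (𝓝 0) := by
    have hχ : Tendsto (fun n ↦ (thickenedIndicator (hδ_pos n) F x : ℝ)) atTop (𝓝 0) :=
      NNReal.tendsto_coe.2 (tendsto_thickenedIndicator_zero_of_notMem hF hδ_pos hδ hx)
    simpa only [Real.zero_rpow hp.ne', zero_smul] using
      (hχ.rpow_const (.inr hp.le)).smul_const (h x)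
  simpa only [integral_zero] using
    tendsto_integral_of_dominated_convergence (fun x ↦ ‖h x‖) hmeas hh.norm
      (fun n ↦ .of_forall (hbound n)) ((measure_eq_zero_iff_ae_notMem.1 hμF).mono hlim)

theorem exists_continuous_eqOn_abs_integral_mul_rpow_norm_sub_lt
    (hF : IsClosed F) (hμF : μ F = 0) (hp : 0 < p) {w : X → ℝ} {f g : X → E}
    (hf : Continuous f) (hg : Continuous g)
    (hint : Integrable (fun x ↦ w x * ‖g x - f x‖ ^ p) μ) {ε : ℝ} (hε : 0 < ε) :
    ∃ v : X → E, Continuous v ∧ EqOn v g F ∧ |∫ x, w x * ‖v x - f x‖ ^ p ∂μ| < ε := by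
  obtain ⟨δ, -, hδ_pos, hδ⟩ := exists_seq_strictAnti_tendsto (0 : ℝ)
  have hlim := tendsto_integral_thickenedIndicator_rpow_smul_of_measure_eq_zero
    hF hμF hp hint hδ_pos hδ
  obtain ⟨n, hn⟩ := (hlim.abs.eventually_lt_const (by simpa only [abs_zero] using hε)).exists
  let χ : X → ℝ := fun x ↦ thickenedIndicator (hδ_pos n) F x
  have hχ : Continuous χ := by fun_prop
  refine ⟨fun x ↦ AffineMap.lineMap (f x) (g x) (χ x), hf.lineMap hg hχ, fun x hx ↦ ?_, ?_⟩
  · simp only [χ, thickenedIndicator_one (hδ_pos n) F hx, NNReal.coe_one,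
      AffineMap.lineMap_apply_one]
  · have hdist (x : X) : w x * ‖AffineMap.lineMap (f x) (g x) (χ x) - f x‖ ^ p =
        χ x ^ p • (w x * ‖g x - f x‖ ^ p) := by
      rw [AffineMap.lineMap_apply_module', add_sub_cancel_right, norm_smul,
        Real.norm_of_nonneg NNReal.zero_le_coe,
        Real.mul_rpow NNReal.zero_le_coe (norm_nonneg _), smul_eq_mul, mul_left_comm]
    simpa only [hdist] using hn

end ClosedNullSet

theorem stmt_6_general {E : Type*} [SeminormedAddCommGroup E] [NormedSpace ℝ E]
    {a b p : ℝ} (hp : 0 < p) {w : ℝ → ℝ} (hw : IntervalIntegrable w volume a b)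
    {f g : ℝ → E} (hf : Continuous f) (hg : Continuous g) {ε : ℝ} (hε : 0 < ε) :
    ∃ v : ℝ → E, Continuous v ∧ v a = g a ∧ v b = g b ∧
      |∫ x in a..b, w x * ‖v x - f x‖ ^ p| < ε := by
  have hint : IntervalIntegrable (fun x ↦ w x * ‖g x - f x‖ ^ p) volume a b :=
    hw.mul_continuousOn ((hg.sub hf).norm.rpow_const fun _ ↦ .inr hp.le).continuousOn
  obtain ⟨v, hv, hvg, hlt⟩ := exists_continuous_eqOn_abs_integral_mul_rpow_norm_sub_lt
    (toFinite {a, b}).isClosed ((toFinite {a, b}).measure_zero _) hp hf hg hint.def' hε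
  refine ⟨v, hv, hvg (mem_insert a {b}), hvg (mem_insert_of_mem a rfl), ?_⟩
  rwa [intervalIntegral.abs_integral_eq_abs_integral_uIoc]

/-- Example 4.2 (infimum is zero): for every `ε > 0` there is a continuous `v` with
`v (-1) ≥ 0` and `v 1 ≤ 0` whose weighted squared deviation from `-1/2` is below `ε`. -/
theorem stmt_6 :
    ∀ ε > (0 : ℝ), ∃ v : ℝ → ℝ, Continuous v ∧ 0 ≤ v (-1) ∧ v 1 ≤ 0 ∧
      (∫ x in (-1 : ℝ)..1, Real.exp (-(x - 1 / 2) ^ 2 / 2) * (v x + 1 / 2) ^ 2) < ε := by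
  intro ε hε
  have hw : Continuous fun x : ℝ ↦ Real.exp (-(x - 1 / 2) ^ 2 / 2) := by fun_prop
  obtain ⟨v, hv, hleft, hright, hlt⟩ := stmt_6_general two_pos (hw.intervalIntegrable (-1) 1)
    (continuous_const (y := (-(1 / 2) : ℝ))) (continuous_const (y := 0)) hε
  exact ⟨v, hv, hleft.ge, hright.le, by simpa using lt_of_abs_lt hlt⟩
end

section
/- For every continuous function v : ℝ → ℝ with v(−1) ≥ 0 and v(1) ≤ 0, one has ∫_{−1}^{1} exp(−(x − 1/2)²/2) · (v(x) + 1/2)² dx > 0. -/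
open Set

theorem intervalIntegral_mul_norm_pow_pos {E : Type*} [NormedAddCommGroup E] {a b : ℝ}
    {w : ℝ → ℝ} {f : ℝ → E} (p : ℕ) (hab : a < b)
    (hw : ContinuousOn w (Icc a b)) (hf : ContinuousOn f (Icc a b))
    (w_nonneg : ∀ x ∈ Ioc a b, 0 ≤ w x) (h : ∃ c ∈ Icc a b, 0 < w c ∧ f c ≠ 0) :
    0 < ∫ x in a..b, w x * ‖f x‖ ^ p := by
  obtain ⟨c, hc, w_pos, f_ne⟩ := h
  refine intervalIntegral.integral_pos hab (hw.mul (hf.norm.pow p)) (fun x hx ↦ ?_) ⟨c, hc, ?_⟩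
  · exact mul_nonneg (w_nonneg x hx) (by positivity)
  · exact mul_pos w_pos (pow_pos (norm_pos_iff.mpr f_ne) p)

theorem stmt_7_general (v : ℝ → ℝ) (hv : ContinuousOn v (Icc (-1) 1))
    (h : ∃ c ∈ Icc (-1 : ℝ) 1, v c ≠ -1 / 2) :
    0 < ∫ x in (-1 : ℝ)..1, Real.exp (-(x - 1 / 2) ^ 2 / 2) * (v x + 1 / 2) ^ 2 := by
  obtain ⟨c, hc, v_ne⟩ := h
  have deviation_ne : v c + 1 / 2 ≠ 0 := fun h_zero ↦ v_ne (by linarith)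
  have weighted_pos :=
    intervalIntegral_mul_norm_pow_pos (a := -1) (b := 1)
      (w := fun x ↦ Real.exp (-(x - 1 / 2) ^ 2 / 2)) (f := fun x ↦ v x + 1 / 2) 2
      (by norm_num) (by fun_prop) (by fun_prop) (fun _ _ ↦ (Real.exp_pos _).le)
      ⟨c, hc, Real.exp_pos _, deviation_ne⟩
  simpa only [Real.norm_eq_abs, sq_abs] using weighted_pos

/-- Example 4.2 (no continuous minimizer): every continuous `v` with `v (-1) ≥ 0` and
`v 1 ≤ 0` has strictly positive weighted squared deviation from `-1/2`. -/
theorem stmt_7 (v : ℝ → ℝ) (hv : Continuous v) (hm : 0 ≤ v (-1)) (hp : v 1 ≤ 0) :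
    0 < ∫ x in (-1 : ℝ)..1, Real.exp (-(x - 1 / 2) ^ 2 / 2) * (v x + 1 / 2) ^ 2 :=
  have v_gt : -1 / 2 < v (-1) := by linarith
  stmt_7_general v hv.continuousOn ⟨-1, by norm_num, v_gt.ne'⟩
end
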